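/- For every integer N ≥ 3 (so that n*_N ≥ 2), the success probability has the closed form π*_N = (c/N)·∑_{n=1}^{n*_N - 1} S_{n-1}(c) + ((n*_N - 1)/N)·S_{n*_N - 1}(c)·∑_{n=n*_N}^{N} 1/(n-1). -/

import Mathlib

/-!
Write `H n = ∑_{k=n}^{N-1} 1/k`, `v n = V_n(0)` and `m = n*_N - 1`; since `N ≥ 3` gives `H 1 > 1`,
we have `m ≥ 1`.

On the stopping region `n ≥ n*_N`, where `H n ≤ 1`, backward induction gives `V_n(1) = n/N` and
`v n = (n/N) H n` (`secV_of_stop`), and the second formula still holds one step earlier, at `n = m`.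
Since `H m > 1`, this yields `v m ≥ m/N`, and backward induction from there gives `v n ≥ n/N` for all
`1 ≤ n ≤ m` (`le_secV_fst_of_le`). Hence the maximum defining `V_n(1)` is its first entry on this
range, and the recursion becomes linear: `v n = c/N + (1 - c/(n+1)) v (n+1)`. Multiplying by
`S_n(c)` makes it telescope: `V_1(1) = (c/N) ∑_{k<n} S_k(c) + S_n(c) v n` for `1 ≤ n ≤ m`
(`secV_one_snd_eq`). The closed form is the case `n = m`.
-/

open Finset Filter Topology

/-- Threshold `n*_N = min{ n ∈ {1,…,N} : ∑_{k=n}^{N-1} 1/k ≤ 1 }`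
(the sum is empty, equal to 0, when `n = N`, so the minimum exists). -/
noncomputable def nstar (N : ℕ) : ℕ :=
  sInf {n : ℕ | 1 ≤ n ∧ n ≤ N ∧ ∑ k ∈ Finset.Ico n N, (1 : ℝ) / k ≤ 1}

/-- Value functions: `(secV c N n).1` is `V_{n,N}(0)` and `(secV c N n).2` is `V_{n,N}(1)`,
defined by backward recursion: `V_{N,N}(0) = 0`, `V_{N,N}(1) = 1`; for `1 ≤ n ≤ N-1`,
`V_{n,N}(0) = (1/(n+1))·V_{n+1,N}(1) + (n/(n+1))·V_{n+1,N}(0)` and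
`V_{n,N}(1) = max{ c·(n/N) + (1-c)·V_{n,N}(0), n/N }`; and
`V_{0,N}(0) = max{ c/N + (1-c)·V_{1,N}(0), 1/N }` (the value `V_{0,N}(1)` is unused, set to 0). -/
noncomputable def secV (c : ℝ) (N : ℕ) (n : ℕ) : ℝ × ℝ :=
  if _h : N ≤ n then (0, 1)
  else
    let next := secV c N (n + 1)
    if n = 0 then
      (max (c / N + (1 - c) * next.1) (1 / N), 0)
    else
      let v0 := (1 / ((n : ℝ) + 1)) * next.2 + ((n : ℝ) / ((n : ℝ) + 1)) * next.1
      (v0, max (c * ((n : ℝ) / N) + (1 - c) * v0) ((n : ℝ) / N))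
termination_by N - n
decreasing_by omega

/-- `S_n(c) = ∏_{k=1}^n (1 - c/k)`, with `S_0(c) = 1` (empty product). -/
noncomputable def Sprod (c : ℝ) (n : ℕ) : ℝ :=
  ∏ k ∈ Finset.Icc 1 n, (1 - c / (k : ℝ))

theorem secV_of_le (c : ℝ) {N n : ℕ} (h : N ≤ n) : secV c N n = (0, 1) := by
  rw [secV]; simp [h]

theorem secV_fst (c : ℝ) {N n : ℕ} (h1 : 1 ≤ n) (h : n < N) :
    (secV c N n).1 = (1 / ((n : ℝ) + 1)) * (secV c N (n + 1)).2
      + ((n : ℝ) / ((n : ℝ) + 1)) * (secV c N (n + 1)).1 := by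
  rw [secV]; simp [not_le.mpr h, Nat.one_le_iff_ne_zero.mp h1]

theorem secV_snd (c : ℝ) {N n : ℕ} (h1 : 1 ≤ n) (h : n < N) :
    (secV c N n).2 = max (c * ((n : ℝ) / N) + (1 - c) * (secV c N n).1) ((n : ℝ) / N) := by
  rw [secV_fst c h1 h, secV]; simp [not_le.mpr h, Nat.one_le_iff_ne_zero.mp h1]

theorem Sprod_succ (c : ℝ) (n : ℕ) :
    Sprod c (n + 1) = Sprod c n * (1 - c / ((n : ℝ) + 1)) := by
  rw [Sprod, Finset.prod_Icc_succ_top (by omega)]; simp [Sprod]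

theorem nstar_spec {N : ℕ} (hN : 1 ≤ N) :
    1 ≤ nstar N ∧ nstar N ≤ N ∧ ∑ k ∈ Finset.Ico (nstar N) N, (1 : ℝ) / k ≤ 1 :=
  Nat.sInf_mem (s := {n : ℕ | 1 ≤ n ∧ n ≤ N ∧ ∑ k ∈ Finset.Ico n N, (1 : ℝ) / k ≤ 1})
    ⟨N, hN, le_rfl, by simp⟩

theorem one_lt_sum_of_lt_nstar {N n : ℕ} (hN : 1 ≤ N) (h1 : 1 ≤ n) (h : n < nstar N) :
    1 < ∑ k ∈ Finset.Ico n N, (1 : ℝ) / k := by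
  by_contra! hle
  exact Nat.notMem_of_lt_sInf h ⟨h1, by have := (nstar_spec hN).2.1; omega, hle⟩

theorem two_le_nstar {N : ℕ} (hN : 3 ≤ N) : 2 ≤ nstar N := by
  obtain ⟨h1, -, h3⟩ := nstar_spec (N := N) (by omega)
  by_contra! hlt
  rw [show nstar N = 1 by omega] at h3
  have hsub : ∑ k ∈ Finset.Ico 1 3, (1 : ℝ) / (k : ℕ) ≤ ∑ k ∈ Finset.Ico 1 N, (1 : ℝ) / (k : ℕ) :=
    Finset.sum_le_sum_of_subset_of_nonneg (Finset.Ico_subset_Ico_right hN)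
      fun i _ _ => by positivity
  norm_num [Finset.sum_Ico_succ_top] at hsub h3
  linarith

/-- One backward step of `V_n(0) = (n/N) ∑_{k=n}^{N-1} 1/k`. It requires stopping to be optimal
only at `n + 1`, so it also applies at `n = n*_N - 1`. -/
theorem secV_fst_of_succ {c : ℝ} {N n : ℕ} (h1 : 1 ≤ n) (h : n < N)
    (hs : secV c N (n + 1) = (((n + 1 : ℕ) : ℝ) / N * ∑ k ∈ Finset.Ico (n + 1) N, (1 : ℝ) / k,
      ((n + 1 : ℕ) : ℝ) / N)) :
    (secV c N n).1 = (n : ℝ) / N * ∑ k ∈ Finset.Ico n N, (1 : ℝ) / k := by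
  have hn : (n : ℝ) ≠ 0 := by positivity
  have hN : (N : ℝ) ≠ 0 := by
    have : N ≠ 0 := by omega
    exact_mod_cast this
  have hn1 : (n : ℝ) + 1 ≠ 0 := by positivity
  rw [secV_fst c h1 h, hs, Finset.sum_eq_sum_Ico_succ_bot h]
  push_cast
  field_simp

/-- The value functions on the stopping region. -/
theorem secV_of_stop {c : ℝ} (hc1 : c < 1) {N : ℕ} (hN : 1 ≤ N) {n : ℕ} (hs : nstar N ≤ n)
    (hn : n ≤ N) :
    secV c N n = ((n : ℝ) / N * ∑ k ∈ Finset.Ico n N, (1 : ℝ) / k, (n : ℝ) / N) := by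
  obtain ⟨hs1, -, hsum⟩ := nstar_spec hN
  induction hn using Nat.decreasingInduction with
  | self =>
    have : (N : ℝ) ≠ 0 := by positivity
    simp [secV_of_le, this]
  | of_succ n hlt ih =>
    have h0 := secV_fst_of_succ (by omega) hlt (ih (by omega))
    have hle : ∑ k ∈ Finset.Ico n N, (1 : ℝ) / k ≤ 1 :=
      (Finset.sum_le_sum_of_subset_of_nonneg (Finset.Ico_subset_Ico_left hs)
        fun i _ _ => by positivity).trans hsum
    refine Prod.ext h0 ?_
    rw [secV_snd c (by omega) hlt, h0]
    apply max_eq_right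
    have hq : (0 : ℝ) ≤ (1 - c) * ((n : ℝ) / N) := mul_nonneg (by linarith) (by positivity)
    nlinarith [mul_le_mul_of_nonneg_left hle hq]

theorem secV_fst_pred_nstar {c : ℝ} (hc1 : c < 1) {N m : ℕ} (hN : 1 ≤ N) (hm : 1 ≤ m)
    (hs : m + 1 = nstar N) :
    (secV c N m).1 = (m : ℝ) / N * ∑ k ∈ Finset.Ico m N, (1 : ℝ) / k := by
  have hsN := (nstar_spec hN).2.1
  exact secV_fst_of_succ hm (by omega) (secV_of_stop hc1 hN (by omega) (by omega))

/-- Before the threshold, continuing is worth at least as much as stopping. -/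
theorem le_secV_fst_of_le {c : ℝ} (hc1 : c < 1) {N m n : ℕ} (hN : 1 ≤ N)
    (hs : m + 1 = nstar N) (h1 : 1 ≤ n) (hn : n ≤ m) :
    (n : ℝ) / N ≤ (secV c N n).1 := by
  have hsN := (nstar_spec hN).2.1
  induction hn using Nat.decreasingInduction with
  | self =>
    rw [secV_fst_pred_nstar hc1 hN h1 hs]
    exact le_mul_of_one_le_right (by positivity)
      (one_lt_sum_of_lt_nstar hN h1 (by omega)).le
  | of_succ n hlt ih =>
    have ih := ih (by omega)
    have h2 : ((n + 1 : ℕ) : ℝ) / N ≤ (secV c N (n + 1)).2 := by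
      rw [secV_snd c (by omega) (by omega)]; exact le_max_right _ _
    rw [secV_fst c h1 (by omega)]
    -- A convex combination of two quantities, each at least `(n+1)/N`.
    calc (n : ℝ) / N ≤ ((n + 1 : ℕ) : ℝ) / N := by gcongr; omega
      _ = 1 / ((n : ℝ) + 1) * (((n + 1 : ℕ) : ℝ) / N)
          + (n : ℝ) / ((n : ℝ) + 1) * (((n + 1 : ℕ) : ℝ) / N) := by
        have : (n : ℝ) + 1 ≠ 0 := by positivity
        field_simp
        ring
      _ ≤ _ := by gcongr

theorem secV_snd_of_le {c : ℝ} (hc1 : c < 1) {N m n : ℕ} (hN : 1 ≤ N)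
    (hs : m + 1 = nstar N) (h1 : 1 ≤ n) (hn : n ≤ m) :
    (secV c N n).2 = c * ((n : ℝ) / N) + (1 - c) * (secV c N n).1 := by
  have hsN := (nstar_spec hN).2.1
  rw [secV_snd c h1 (by omega)]
  apply max_eq_left
  nlinarith [mul_le_mul_of_nonneg_left (le_secV_fst_of_le hc1 hN hs h1 hn) (sub_nonneg.mpr hc1.le)]

/-- The telescoped form of the linear recursion for `V_n(0)` before the threshold. -/
theorem secV_one_snd_eq {c : ℝ} (hc1 : c < 1) {N m n : ℕ} (hN : 1 ≤ N)
    (hs : m + 1 = nstar N) (h1 : 1 ≤ n) (hn : n ≤ m) :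
    (secV c N 1).2 = c / N * ∑ k ∈ Finset.range n, Sprod c k + Sprod c n * (secV c N n).1 := by
  have hsN := (nstar_spec hN).2.1
  induction n, h1 using Nat.le_induction with
  | base =>
    rw [secV_snd_of_le hc1 hN hs le_rfl hn]
    simp [Sprod, div_eq_mul_inv]
  | succ n h1 ih =>
    have hN0 : (N : ℝ) ≠ 0 := by positivity
    have hn1 : (n : ℝ) + 1 ≠ 0 := by positivity
    rw [ih (by omega), secV_fst c h1 (by omega), secV_snd_of_le hc1 hN hs (by omega) hn,
      Finset.sum_range_succ, Sprod_succ]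
    push_cast
    field_simp
    ring

/-- For every integer `N ≥ 3` (so that `n*_N ≥ 2`), the success probability
`π*_N = V_{1,N}(1)` has the closed form
`π*_N = (c/N)·∑_{n=1}^{n*_N-1} S_{n-1}(c)
      + ((n*_N-1)/N)·S_{n*_N-1}(c)·∑_{n=n*_N}^{N} 1/(n-1)`. -/
theorem success_prob_closed_form (c : ℝ) (hc0 : 0 ≤ c) (hc1 : c < 1)
    (N : ℕ) (hN : 3 ≤ N) :
    (secV c N 1).2 =
      (c / N) * ∑ n ∈ Finset.Icc 1 (nstar N - 1), Sprod c (n - 1) +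
      (((nstar N : ℝ) - 1) / N) * Sprod c (nstar N - 1) *
        ∑ n ∈ Finset.Icc (nstar N) N, 1 / ((n : ℝ) - 1) := by
  obtain ⟨m, hm⟩ : ∃ m, m + 1 = nstar N := ⟨nstar N - 1, by have := two_le_nstar hN; omega⟩
  have hm1 : 1 ≤ m := by have := two_le_nstar hN; omega
  have hN1 : 1 ≤ N := by omega
  have e1 : ∑ n ∈ Finset.Icc 1 m, Sprod c (n - 1) = ∑ k ∈ Finset.range m, Sprod c k := by
    rw [Finset.range_eq_Ico]
    exact (Finset.sum_Ico_add' (fun n => Sprod c (n - 1)) 0 m 1).symm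
  have e2 : ∑ n ∈ Finset.Icc (m + 1) N, 1 / ((n : ℝ) - 1) = ∑ k ∈ Finset.Ico m N, (1 : ℝ) / k := by
    have := Finset.sum_Ico_add' (fun n : ℕ => 1 / ((n : ℝ) - 1)) m N 1
    simp only [Nat.cast_add, Nat.cast_one, add_sub_cancel_right] at this
    exact this.symm
  rw [← hm, Nat.add_sub_cancel, e1, e2, secV_one_snd_eq hc1 hN1 hm hm1 le_rfl,
    secV_fst_pred_nstar hc1 hN1 hm1 hm]
  push_cast
  ring
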